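/- Let 𝕄 = ⟨M, 𝒞⟩ be a countable transitive model of GB⁻ and let ℙ be the notion of class forcing for 𝕄 whose conditions are the (not necessarily finite) partial functions from ω to 2 lying in M, ordered by reverse inclusion. Then there is a ℙ-name σ ∈ M such that for every x ⊆ ω with x ∈ M, there is a ℙ-generic filter G over 𝕄 with σ^G = x. In particular, if the power set of ω is a proper class of 𝕄, then σ is an unbounded ℙ-name. -/

import Mathlib

noncomputable section

namespace CF

attribute [local instance] Classical.propDecidable

/-! ### First-order formulas of the language of set theory -/

/-- First-order `∈`-formulas with variables indexed by `ℕ`. -/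
inductive EFormula : Type
  | mem : ℕ → ℕ → EFormula
  | eq : ℕ → ℕ → EFormula
  | not : EFormula → EFormula
  | or : EFormula → EFormula → EFormula
  | ex : ℕ → EFormula → EFormula

/-- Satisfaction of an `∈`-formula in the structure `⟨D, ∈⟩` under assignment `v`. -/
def EFormula.Sat (D : Set ZFSet) (v : ℕ → ZFSet) : EFormula → Prop
  | .mem i j => v i ∈ v j
  | .eq i j => v i = v j
  | .not φ => ¬ EFormula.Sat D v φ
  | .or φ ψ => EFormula.Sat D v φ ∨ EFormula.Sat D v ψ
  | .ex i φ => ∃ x ∈ D, EFormula.Sat D (Function.update v i x) φ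

/-- All variables occurring in the formula are `< m`. -/
def EFormula.VarsLt (m : ℕ) : EFormula → Prop
  | .mem i j => i < m ∧ j < m
  | .eq i j => i < m ∧ j < m
  | .not φ => EFormula.VarsLt m φ
  | .or φ ψ => EFormula.VarsLt m φ ∧ EFormula.VarsLt m ψ
  | .ex i φ => i < m ∧ EFormula.VarsLt m φ

/-- First-order formulas of the two-sorted language of `GB⁻`: set variables indexed by `ℕ`,
class parameters indexed by `ℕ`, and only set quantifiers. -/
inductive GBFormula : Type
  | mem : ℕ → ℕ → GBFormula
  | eq : ℕ → ℕ → GBFormula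
  | cls : ℕ → ℕ → GBFormula    -- `vᵢ ∈ C_j`
  | not : GBFormula → GBFormula
  | or : GBFormula → GBFormula → GBFormula
  | ex : ℕ → GBFormula → GBFormula

/-- Satisfaction of a `GBFormula` with set quantifiers ranging over `Mset`,
class parameters `Cs` and set assignment `v`. -/
def GBFormula.Sat (Mset : Set ZFSet) (Cs : ℕ → Set ZFSet) (v : ℕ → ZFSet) : GBFormula → Prop
  | .mem i j => v i ∈ v j
  | .eq i j => v i = v j
  | .cls i j => v i ∈ Cs j
  | .not φ => ¬ GBFormula.Sat Mset Cs v φ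
  | .or φ ψ => GBFormula.Sat Mset Cs v φ ∨ GBFormula.Sat Mset Cs v ψ
  | .ex i φ => ∃ x ∈ Mset, GBFormula.Sat Mset Cs (Function.update v i x) φ

/-! ### Countable transitive models of GB⁻ -/

/-- A countable transitive second-order model `𝕄 = ⟨M, 𝒞⟩` of `GB⁻`:
`M` is transitive and countable, classes are subsets of `M`, sets are classes, and the axioms
of `GB⁻` hold (extensionality and foundation are automatic for `ZFSet`; the set axioms of `ZF⁻`
with separation and collection allowing class parameters, together with first-order class
comprehension, are listed). -/
structure GBModel where
  M : Set ZFSet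
  Cls : Set (Set ZFSet)
  countable_M : M.Countable
  countable_Cls : Cls.Countable
  transitive : ∀ x ∈ M, ∀ y : ZFSet, y ∈ x → y ∈ M
  sets_are_classes : ∀ x ∈ M, x.toSet ∈ Cls
  classes_sub : ∀ C ∈ Cls, C ⊆ M
  empty_mem : (∅ : ZFSet) ∈ M
  pair_mem : ∀ x ∈ M, ∀ y ∈ M, ({x, y} : ZFSet) ∈ M
  sUnion_mem : ∀ x ∈ M, (ZFSet.sUnion x : ZFSet) ∈ M
  omega_mem : ZFSet.omega ∈ M
  comprehension : ∀ (φ : GBFormula) (v : ℕ → ZFSet) (Cs : ℕ → Set ZFSet),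
    (∀ n, v n ∈ M) → (∀ n, Cs n ∈ Cls) →
    {x : ZFSet | x ∈ M ∧ GBFormula.Sat M Cs (Function.update v 0 x) φ} ∈ Cls
  separation : ∀ C ∈ Cls, ∀ a ∈ M, ∃ b ∈ M, ∀ x : ZFSet, x ∈ b ↔ x ∈ a ∧ x ∈ C
  collection : ∀ C ∈ Cls, ∀ a ∈ M,
    (∀ x : ZFSet, x ∈ a → ∃ y ∈ M, x.pair y ∈ C) →
    ∃ b ∈ M, ∀ x : ZFSet, x ∈ a → ∃ y : ZFSet, y ∈ b ∧ x.pair y ∈ C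

/-- A notion of class forcing `ℙ = ⟨P, ≤_ℙ⟩` for `𝕄`: a partial order (with maximal element
`𝟙_ℙ`) whose domain and order relation are classes of `𝕄`. -/
structure ClassForcing (𝕄 : GBModel) where
  P : Set ZFSet
  le : ZFSet → ZFSet → Prop
  one : ZFSet
  one_mem : one ∈ P
  le_one : ∀ p ∈ P, le p one
  le_refl : ∀ p ∈ P, le p p
  le_trans : ∀ p q r : ZFSet, le p q → le q r → le p r
  P_cls : P ∈ 𝕄.Cls
  le_cls : {x : ZFSet | ∃ p ∈ P, ∃ q ∈ P, le p q ∧ x = p.pair q} ∈ 𝕄.Cls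

/-! ### Names and their evaluation -/

/-- Auxiliary rank-bounded version of `IsName`. -/
def IsNameAux (S : Set ZFSet) (o : Ordinal) (σ : ZFSet) : Prop :=
  ∀ x ∈ σ.toSet, ∃ τ p : ZFSet, x = τ.pair p ∧ p ∈ S ∧
    ∃ _h : τ.rank < o, IsNameAux S τ.rank τ
termination_by o

/-- `σ` is a `ℙ`-name (for the forcing with conditions `S`): every element of `σ` is a pair
`⟨τ, p⟩` with `τ` a `ℙ`-name and `p ∈ S`. -/
def IsName (S : Set ZFSet) (σ : ZFSet) : Prop := IsNameAux S σ.rank σ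

/-- Image of a ZFSet under an arbitrary function (using choice for definability). -/
def zimage (f : ZFSet → ZFSet) (x : ZFSet) : ZFSet :=
  @ZFSet.image f (Classical.allZFSetDefinable _) x

/-- Auxiliary rank-bounded version of the evaluation `σ^G` of a name by a filter. -/
def nameEvalAux (G : Set ZFSet) (o : Ordinal) (σ : ZFSet) : ZFSet :=
  zimage (fun τ => if h : τ.rank < o then nameEvalAux G τ.rank τ else ∅)
    (ZFSet.sep (fun τ => ∃ p, p ∈ G ∧ τ.pair p ∈ σ) (ZFSet.sUnion (ZFSet.sUnion σ)))
termination_by o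
decreasing_by exact h

/-- The evaluation `σ^G = {τ^G | ∃ p ∈ G, ⟨τ, p⟩ ∈ σ}` of a name `σ` by a filter `G`. -/
def nameEval (G : Set ZFSet) (σ : ZFSet) : ZFSet := nameEvalAux G σ.rank σ

/-- Auxiliary rank-bounded version of `nameTC`. -/
def nameTCAux (o : Ordinal) (σ : ZFSet) : Set ZFSet :=
  {x | ∃ τ p : ZFSet, τ.pair p ∈ σ ∧ (x = p ∨ ∃ _h : τ.rank < o, x ∈ nameTCAux τ.rank τ)}
termination_by o

/-- The set `tc(σ) = ⋃ {{p} ∪ tc(τ) | ⟨τ,p⟩ ∈ σ}` of conditions appearing in the transitive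
closure of the name `σ`. -/
def nameTC (σ : ZFSet) : Set ZFSet := nameTCAux σ.rank σ

/-! ### Filters, genericity, generic extensions -/

/-- `G` is a filter on the partial order with domain `S` and ordering `le`. -/
def IsFilterOn (S : Set ZFSet) (le : ZFSet → ZFSet → Prop) (G : Set ZFSet) : Prop :=
  G ⊆ S ∧ G.Nonempty ∧ (∀ p ∈ G, ∀ q ∈ S, le p q → q ∈ G) ∧
    ∀ p ∈ G, ∀ q ∈ G, ∃ r ∈ G, le r p ∧ le r q

/-- `D` is a dense subclass of the partial order `⟨S, le⟩`. -/
def DenseIn (S : Set ZFSet) (le : ZFSet → ZFSet → Prop) (D : Set ZFSet) : Prop :=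
  D ⊆ S ∧ ∀ p ∈ S, ∃ q ∈ D, le q p

/-- `G` is a generic filter on `⟨S, le⟩` over `𝕄`: a filter meeting every dense subclass
of `⟨S, le⟩` lying in `𝒞`. -/
def IsGeneric (𝕄 : GBModel) (S : Set ZFSet) (le : ZFSet → ZFSet → Prop) (G : Set ZFSet) : Prop :=
  IsFilterOn S le G ∧ ∀ D ∈ 𝕄.Cls, DenseIn S le D → (G ∩ D).Nonempty

/-- The generic extension `M[G] = {σ^G | σ ∈ M a name for the forcing with domain S}`. -/
def MGen (𝕄 : GBModel) (S : Set ZFSet) (G : Set ZFSet) : Set ZFSet :=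
  {x | ∃ σ : ZFSet, σ ∈ 𝕄.M ∧ IsName S σ ∧ nameEval G σ = x}

/-! ### Compatibility, the set decision property -/

/-- `p` and `q` are compatible in `⟨S, le⟩`. -/
def Compat (S : Set ZFSet) (le : ZFSet → ZFSet → Prop) (p q : ZFSet) : Prop :=
  ∃ r ∈ S, le r p ∧ le r q

/-- `p ≤* q` : every extension of `p` is compatible with `q`. -/
def leStar (S : Set ZFSet) (le : ZFSet → ZFSet → Prop) (p q : ZFSet) : Prop :=
  ∀ r ∈ S, le r p → Compat S le r q

/-- `p` decides the set of conditions `A`: for every `a ∈ A`, either `p ≤* a` or `p ⊥ a`. -/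
def Decides (S : Set ZFSet) (le : ZFSet → ZFSet → Prop) (p A : ZFSet) : Prop :=
  ∀ a : ZFSet, a ∈ A → leStar S le p a ∨ ¬ Compat S le p a

/-- The set decision property: every set of conditions in `M` is decided densely. -/
def SetDecisionProperty (𝕄 : GBModel) (F : ClassForcing 𝕄) : Prop :=
  ∀ p ∈ F.P, ∀ A : ZFSet, A ∈ 𝕄.M → (∀ a : ZFSet, a ∈ A → a ∈ F.P) →
    ∃ q ∈ F.P, F.le q p ∧ Decides F.P F.le q A

/-! ### The forcing theorem -/

/-- Encode a finite list of sets as a single set by iterated Kuratowski pairing. -/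
def listEncode : List ZFSet → ZFSet
  | [] => ∅
  | a :: l => a.pair (listEncode l)

/-- The assignment sending variable `n < m` to `σₙ^G` (and `∅` beyond `m`). -/
def namesAssign (G : Set ZFSet) (m : ℕ) (σs : Fin m → ZFSet) : ℕ → ZFSet :=
  fun n => if h : n < m then nameEval G (σs ⟨n, h⟩) else ∅

/-- `p ⊩_ℙ φ(σ₀, …, σ_{m-1})` : for every generic `G ∋ p`, `M[G] ⊨ φ(σ₀^G, …, σ_{m-1}^G)`. -/
def Forces (𝕄 : GBModel) (F : ClassForcing 𝕄) (φ : EFormula) (m : ℕ) (p : ZFSet)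
    (σs : Fin m → ZFSet) : Prop :=
  ∀ G : Set ZFSet, IsGeneric 𝕄 F.P F.le G → p ∈ G →
    EFormula.Sat (MGen 𝕄 F.P G) (namesAssign G m σs) φ

/-- `ℙ` satisfies the forcing theorem over `𝕄`: for every `∈`-formula `φ(v₀,…,v_{m-1})`,
the forcing relation is a class of `𝕄` (definability lemma) and everything true in a generic
extension is forced by a condition in the generic filter (truth lemma). -/
def SatisfiesForcingTheorem (𝕄 : GBModel) (F : ClassForcing 𝕄) : Prop :=
  ∀ (φ : EFormula) (m : ℕ), EFormula.VarsLt m φ →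
    ({x : ZFSet | ∃ p ∈ F.P, ∃ σs : Fin m → ZFSet,
        (∀ i, σs i ∈ 𝕄.M ∧ IsName F.P (σs i)) ∧
        Forces 𝕄 F φ m p σs ∧
        x = p.pair (listEncode (List.ofFn σs))} ∈ 𝕄.Cls) ∧
    ∀ σs : Fin m → ZFSet, (∀ i, σs i ∈ 𝕄.M ∧ IsName F.P (σs i)) →
      ∀ G : Set ZFSet, IsGeneric 𝕄 F.P F.le G →
        EFormula.Sat (MGen 𝕄 F.P G) (namesAssign G m σs) φ →
        ∃ p ∈ G, Forces 𝕄 F φ m p σs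

/-! ### Complete subforcings, the set reduction property -/

/-- `A` is an antichain of the partial order `⟨S, le⟩`. -/
def IsAntichainIn (S : Set ZFSet) (le : ZFSet → ZFSet → Prop) (A : Set ZFSet) : Prop :=
  A ⊆ S ∧ ∀ p ∈ A, ∀ q ∈ A, p ≠ q → ¬ Compat S le p q

/-- `A` is a maximal antichain of the partial order `⟨S, le⟩`. -/
def IsMaxAntichainIn (S : Set ZFSet) (le : ZFSet → ZFSet → Prop) (A : Set ZFSet) : Prop :=
  IsAntichainIn S le A ∧ ∀ p ∈ S, ∃ a ∈ A, Compat S le p a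

/-- `ℚ ⊲∘ ℙ` : `Q` is a set-sized complete subforcing of `ℙ` (with the induced ordering):
`Q ∈ M`, `Q ⊆ P`, `𝟙 ∈ Q`, and every maximal antichain of `ℚ` in `M` is predense in `ℙ`. -/
def IsCompleteSub (𝕄 : GBModel) (F : ClassForcing 𝕄) (Q : ZFSet) : Prop :=
  Q ∈ 𝕄.M ∧ Q.toSet ⊆ F.P ∧ F.one ∈ Q ∧
    ∀ A : ZFSet, A ∈ 𝕄.M → A.toSet ⊆ Q.toSet → IsMaxAntichainIn Q.toSet F.le A.toSet →
      ∀ p ∈ F.P, ∃ a : ZFSet, a ∈ A ∧ Compat F.P F.le p a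

/-- `ℚ^{∥q}` : the conditions of `Q` compatible with `q` in `ℙ`. -/
def QPar (𝕄 : GBModel) (F : ClassForcing 𝕄) (Q : ZFSet) (q : ZFSet) : Set ZFSet :=
  {r | r ∈ Q ∧ Compat F.P F.le r q}

/-- The property `(*)(A, q, ℚ)`: for every `a ∈ A`, the set of `r ∈ ℚ^{∥q}` such that either
all `s ≤ q, r` satisfy `s ≤* a`, or all `s ≤ q, r` satisfy `s ⊥ a`, is dense in `ℚ^{∥q}`. -/
def StarProp (𝕄 : GBModel) (F : ClassForcing 𝕄) (A q Q : ZFSet) : Prop :=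
  ∀ a : ZFSet, a ∈ A → ∀ r₀ ∈ QPar 𝕄 F Q q, ∃ r₁ ∈ QPar 𝕄 F Q q, F.le r₁ r₀ ∧
    ((∀ s ∈ F.P, F.le s q → F.le s r₁ → leStar F.P F.le s a) ∨
      (∀ s ∈ F.P, F.le s q → F.le s r₁ → ¬ Compat F.P F.le s a))

/-- The set reduction property. -/
def SetReductionProperty (𝕄 : GBModel) (F : ClassForcing 𝕄) : Prop :=
  ∀ A : ZFSet, A ∈ 𝕄.M → (∀ a : ZFSet, a ∈ A → a ∈ F.P) →
    ∀ p ∈ F.P, ∃ q ∈ F.P, F.le q p ∧ ∃ Q : ZFSet, IsCompleteSub 𝕄 F Q ∧ StarProp 𝕄 F A q Q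

/-- Every new set added by `ℙ` is added by a set-sized complete subforcing of `ℙ`. -/
def EveryNewSetBySub (𝕄 : GBModel) (F : ClassForcing 𝕄) : Prop :=
  ∀ G : Set ZFSet, IsGeneric 𝕄 F.P F.le G →
    ∀ x : ZFSet, x ∈ MGen 𝕄 F.P G → x ∉ 𝕄.M →
      ∃ Q : ZFSet, IsCompleteSub 𝕄 F Q ∧ x ∈ MGen 𝕄 Q.toSet (G ∩ Q.toSet)

/-! ### The q-reduction of a name -/

/-- First component of a Kuratowski pair (junk value `∅` otherwise). -/
def fstZ (x : ZFSet) : ZFSet :=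
  if h : ∃ a b : ZFSet, x = a.pair b then h.choose else ∅

/-- Second component of a Kuratowski pair (junk value `∅` otherwise). -/
def sndZ (x : ZFSet) : ZFSet :=
  if h : ∃ a b : ZFSet, x = a.pair b then h.choose_spec.choose else ∅

/-- Cartesian product of two `ZFSet`s. -/
def zprod (a b : ZFSet) : ZFSet :=
  ZFSet.sep (fun x => ∃ u v : ZFSet, u ∈ a ∧ v ∈ b ∧ x = u.pair v)
    (ZFSet.powerset (ZFSet.powerset (a ∪ b)))

/-- Auxiliary rank-bounded version of the `q`-reduction of a name to `Q`. -/
def reduceAux (S : Set ZFSet) (le : ZFSet → ZFSet → Prop) (Q q : ZFSet) (o : Ordinal)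
    (σ : ZFSet) : ZFSet :=
  zimage
    (fun x =>
      (if h : (fstZ x).rank < o then reduceAux S le Q q (fstZ x).rank (fstZ x) else ∅).pair
        (sndZ x))
    (ZFSet.sep
      (fun x => ∃ τ r : ZFSet, x = τ.pair r ∧ r ∈ Q ∧
        ∃ a : ZFSet, τ.pair a ∈ σ ∧ ∀ s ∈ S, le s q → le s r → leStar S le s a)
      (zprod (ZFSet.sUnion (ZFSet.sUnion σ)) Q))
termination_by o
decreasing_by exact h

/-- The `q`-reduction `σ_q^ℚ = {⟨τ_q^ℚ, r⟩ | r ∈ ℚ ∧ ∃a (⟨τ,a⟩ ∈ σ ∧ ∀ s ≤ q,r (s ≤* a))}`. -/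
def reduceName (S : Set ZFSet) (le : ZFSet → ZFSet → Prop) (Q q σ : ZFSet) : ZFSet :=
  reduceAux S le Q q σ.rank σ

/-! ### Projections -/

/-- `f` is a projection from `⟨S, le⟩` (with maximum `one`) onto the subforcing with domain
`Qs`, respecting `X`. -/
def IsProjectionResp (S : Set ZFSet) (le : ZFSet → ZFSet → Prop) (one : ZFSet)
    (Qs X : Set ZFSet) (f : ZFSet → ZFSet) : Prop :=
  (∀ p ∈ S, f p ∈ Qs) ∧
  f one = one ∧
  (∀ p ∈ S, ∀ q ∈ S, le p q → le (f p) (f q)) ∧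
  (∀ p ∈ S, ∀ q ∈ Qs, le q (f p) → ∃ r ∈ S, le r p ∧ le (f r) q) ∧
  (∀ p ∈ X, ∀ q ∈ S, le (f q) p → le q p) ∧
  (∀ p ∈ X, f p = p)

/-- `ℙ` is approachable by projections: there is a class `Π ∈ 𝒞` whose sections `π_{X,y}`
are such that for every set `X ⊆ ℙ` there are a set `y` and a set-sized subforcing `ℚ ⊇ X ∪ {𝟙}`
of `ℙ` with `π_{X,y} : ℙ → ℚ` a projection respecting `X`. -/
def ApproachableByProjections (𝕄 : GBModel) (F : ClassForcing 𝕄) : Prop :=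
  ∃ Pi ∈ 𝕄.Cls, ∀ X : ZFSet, X ∈ 𝕄.M → (∀ x : ZFSet, x ∈ X → x ∈ F.P) →
    ∃ y ∈ 𝕄.M, ∃ Q : ZFSet, Q ∈ 𝕄.M ∧ Q.toSet ⊆ F.P ∧ (∀ x : ZFSet, x ∈ X → x ∈ Q) ∧
      F.one ∈ Q ∧ ∃ f : ZFSet → ZFSet,
        (∀ u ∈ F.P, ∀ v : ZFSet, (f u = v ↔ X.pair (y.pair (u.pair v)) ∈ Pi)) ∧
        IsProjectionResp F.P F.le F.one Q.toSet X.toSet f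

/-- `p ⊩ σ ⊆ τ` for the forcing with domain `S` and ordering `le`. -/
def ForcesSubset (𝕄 : GBModel) (S : Set ZFSet) (le : ZFSet → ZFSet → Prop)
    (p σ τ : ZFSet) : Prop :=
  ∀ G : Set ZFSet, IsGeneric 𝕄 S le G → p ∈ G → nameEval G σ ⊆ nameEval G τ

/-! ### Bounded names, turning proper classes into sets -/

/-- The possible values of the name `σ` in generic extensions. -/
def PossibleValues (𝕄 : GBModel) (S : Set ZFSet) (le : ZFSet → ZFSet → Prop)
    (σ : ZFSet) : Set ZFSet :=
  {x | ∃ G : Set ZFSet, IsGeneric 𝕄 S le G ∧ nameEval G σ = x}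

/-- The name `σ` is bounded: some `A ∈ M` covers all its possible values lying in `M`. -/
def IsBoundedName (𝕄 : GBModel) (F : ClassForcing 𝕄) (σ : ZFSet) : Prop :=
  ∃ A ∈ 𝕄.M, PossibleValues 𝕄 F.P F.le σ ∩ 𝕄.M ⊆ A.toSet

/-- `ℙ` has bounded names: every `ℙ`-name in `M` is bounded. -/
def HasBoundedNames (𝕄 : GBModel) (F : ClassForcing 𝕄) : Prop :=
  ∀ σ : ZFSet, σ ∈ 𝕄.M → IsName F.P σ → IsBoundedName 𝕄 F σ

/-- `X` is a proper class of `𝕄`: a class of `𝕄` that is not (the extension of) a set of `𝕄`. -/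
def IsProperClass (𝕄 : GBModel) (X : Set ZFSet) : Prop :=
  X ∈ 𝕄.Cls ∧ ¬ ∃ x ∈ 𝕄.M, x.toSet = X

/-- The proper class `X` of `𝕄` is turned into a set by forcing with `ℙ`: some `ℙ`-name in `M`
evaluates to `X` under some generic filter. -/
def TurnsIntoSet (𝕄 : GBModel) (F : ClassForcing 𝕄) (X : Set ZFSet) : Prop :=
  ∃ σ : ZFSet, σ ∈ 𝕄.M ∧ IsName F.P σ ∧
    ∃ G : Set ZFSet, IsGeneric 𝕄 F.P F.le G ∧ (nameEval G σ).toSet = X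

/-! ### Functions and partial functions as sets, collapse forcings -/

/-- `p` is a partial function from (a subset of) `γ` into the class `Y`. -/
def IsPFunOn (p γ : ZFSet) (Y : Set ZFSet) : Prop :=
  (∀ x : ZFSet, x ∈ p → ∃ a b : ZFSet, x = a.pair b ∧ a ∈ γ ∧ b ∈ Y) ∧
  ∀ a b b' : ZFSet, a.pair b ∈ p → a.pair b' ∈ p → b = b'

/-- The domain of a set of pairs. -/
def pdom (p : ZFSet) : Set ZFSet := {a | ∃ b : ZFSet, a.pair b ∈ p}

/-- `f` is (the graph of) an injective function from `X` into `Y`. -/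
def ZInjFun (f : ZFSet) (X Y : Set ZFSet) : Prop :=
  (∀ x : ZFSet, x ∈ f → ∃ a b : ZFSet, x = a.pair b ∧ a ∈ X ∧ b ∈ Y) ∧
  (∀ a b b' : ZFSet, a.pair b ∈ f → a.pair b' ∈ f → b = b') ∧
  (∀ a ∈ X, ∃ b : ZFSet, a.pair b ∈ f) ∧
  (∀ a a' b : ZFSet, a.pair b ∈ f → a'.pair b ∈ f → a = a')

/-- `D` has size less than the cardinality of `γ` in the sense of `M`:
no function of `M` injects `γ` into `D`. -/
def SmallerThan (𝕄 : GBModel) (γ : ZFSet) (D : Set ZFSet) : Prop :=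
  ¬ ∃ f ∈ 𝕄.M, ZInjFun f γ.toSet D

/-- Conditions of `Col(γ, Y)^M`: partial functions of `M` from `γ` to `Y` whose domain has
size less than the cardinality of `γ` in `M`. -/
def ColCond (𝕄 : GBModel) (γ : ZFSet) (Y : Set ZFSet) (p : ZFSet) : Prop :=
  p ∈ 𝕄.M ∧ IsPFunOn p γ Y ∧ SmallerThan 𝕄 γ (pdom p)

/-- Conditions of `Col₋*(γ, Y)^M`: those conditions of `Col(γ, Y)^M` whose domain is
an ordinal. -/
def ColStarCond (𝕄 : GBModel) (γ : ZFSet) (Y : Set ZFSet) (p : ZFSet) : Prop :=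
  ColCond 𝕄 γ Y p ∧ ∃ β : ZFSet, β.IsOrdinal ∧ pdom p = β.toSet

/-- `f` is (the graph of) a function with domain `I`. -/
def ZFuncOn (f I : ZFSet) : Prop :=
  (∀ x : ZFSet, x ∈ f → ∃ a b : ZFSet, x = a.pair b ∧ a ∈ I) ∧
  (∀ a b b' : ZFSet, a.pair b ∈ f → a.pair b' ∈ f → b = b') ∧
  (∀ a : ZFSet, a ∈ I → ∃ b : ZFSet, a.pair b ∈ f)

/-- Application of a set-function to an argument (junk value `∅` if undefined). -/
def zapp (f i : ZFSet) : ZFSet :=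
  if h : ∃ b : ZFSet, i.pair b ∈ f then h.choose else ∅

/-! ### Pretameness -/

/-- `ℙ` is pretame for `𝕄`: for every `p ∈ ℙ`, `I ∈ M` and every `𝒞`-coded sequence
`⟨D_i | i ∈ I⟩` (coded as the class of pairs `⟨i, x⟩` with `x ∈ D_i`) of dense subclasses
of `ℙ`, there are `q ≤ p` and `⟨d_i | i ∈ I⟩ ∈ M` with `d_i ⊆ D_i` predense below `q`. -/
def Pretame (𝕄 : GBModel) (F : ClassForcing 𝕄) : Prop :=
  ∀ p ∈ F.P, ∀ I : ZFSet, I ∈ 𝕄.M → ∀ D ∈ 𝕄.Cls,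
    (∀ i : ZFSet, i ∈ I →
      (∀ x : ZFSet, i.pair x ∈ D → x ∈ F.P) ∧ ∀ r ∈ F.P, ∃ s : ZFSet, i.pair s ∈ D ∧ F.le s r) →
    ∃ q ∈ F.P, F.le q p ∧ ∃ d ∈ 𝕄.M, ZFuncOn d I ∧
      ∀ i : ZFSet, i ∈ I → (∀ x : ZFSet, x ∈ zapp d i → i.pair x ∈ D) ∧
        ∀ r ∈ F.P, F.le r q → ∃ a : ZFSet, a ∈ zapp d i ∧ Compat F.P F.le r a

/-! ### The specific forcings of Sections 6 and 7 -/

/-- Conditions of Definition 6.8: (not necessarily finite) partial functions from `ω` to `2`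
lying in `M`. -/
def PCond (𝕄 : GBModel) (p : ZFSet) : Prop :=
  p ∈ 𝕄.M ∧ IsPFunOn p ZFSet.omega {x : ZFSet | x = ∅ ∨ x = ({∅} : ZFSet)}

/-- Conditions of the finite support product `ℚ` of `ω` many copies of `ℙ`:
finite sequences `⟨p₀, …, p_k⟩` of `ℙ`-conditions. -/
def QCond (𝕄 : GBModel) (s : ZFSet) : Prop :=
  s ∈ 𝕄.M ∧ ∃ n : ZFSet, n ∈ ZFSet.omega ∧ ZFuncOn s n ∧
    ∀ i : ZFSet, i ∈ n → PCond 𝕄 (zapp s i)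

/-- The coordinatewise ordering on `ℚ`. -/
def QLe (s' s : ZFSet) : Prop :=
  pdom s ⊆ pdom s' ∧ ∀ i ∈ pdom s, zapp s i ⊆ zapp s' i

/-- The power class `𝒫(ω)^M`. -/
def PowOmega (𝕄 : GBModel) : Set ZFSet :=
  {x : ZFSet | x ∈ 𝕄.M ∧ x ⊆ ZFSet.omega}

/-- `X ⊆ M` is definable over `⟨M, ∈⟩` (from set parameters). -/
def DefinableOver (Mset : Set ZFSet) (X : Set ZFSet) : Prop :=
  ∃ (φ : EFormula) (v : ℕ → ZFSet), (∀ n, v n ∈ Mset) ∧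
    X = {x : ZFSet | x ∈ Mset ∧ EFormula.Sat Mset (Function.update v 0 x) φ}

/-- Every set of `M` is countable in `M`: it injects into `ω` by a function of `M`. -/
def AllSetsCountable (𝕄 : GBModel) : Prop :=
  ∀ x ∈ 𝕄.M, ∃ f ∈ 𝕄.M, ZInjFun f x.toSet ZFSet.omega.toSet


/-!
A total function `p : ω → 2` in `M` is a minimal condition, so the conditions it extends form a
generic filter `G`. Let `σ` be the name `{⟨ň, {⟨n, 1⟩}⟩ | n ∈ ω}`. If `p` is the characteristic
function of `x`, then `{⟨n, 1⟩} ∈ G` exactly when `n ∈ x`, and hence `σ^G = x`. That `σ` lies in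
`M` is an instance of replacement along `ω`, the map `n ↦ ň` being definable by recursion.
-/

/-! ### Natural numbers as sets -/

/-- The von Neumann numeral `n = {0, …, n - 1}`. -/
def numeral : ℕ → ZFSet
  | 0 => ∅
  | n + 1 => insert (numeral n) (numeral n)

theorem mk_ofNat (n : ℕ) : ZFSet.mk (PSet.ofNat n) = numeral n := by
  induction n with
  | zero => rfl
  | succ n ih =>
    rw [numeral, ← ih]
    rfl

theorem mem_omega_iff {x : ZFSet} : x ∈ ZFSet.omega ↔ ∃ n, x = numeral n := by
  constructor
  · refine Quotient.inductionOn x ?_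
    rintro y ⟨⟨n⟩, hy⟩
    exact ⟨n, (ZFSet.sound hy).trans (mk_ofNat n)⟩
  · rintro ⟨n, rfl⟩
    induction n with
    | zero => exact ZFSet.omega_zero
    | succ n ih => exact ZFSet.omega_succ ih

theorem rank_numeral (n : ℕ) : (numeral n).rank = n := by
  induction n with
  | zero => simp [numeral]
  | succ n ih => simp [numeral, ih]

theorem numeral_injective : Function.Injective numeral := fun m n h => by
  have hrank := congrArg ZFSet.rank h
  rwa [rank_numeral, rank_numeral, Nat.cast_inj] at hrank

/-! ### Closure properties of the universe of a model -/

namespace GBModel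

variable {𝕄 : GBModel} {a b : ZFSet}

theorem singleton_mem (ha : a ∈ 𝕄.M) : {a} ∈ 𝕄.M := by
  simpa only [ZFSet.pair_eq_singleton] using 𝕄.pair_mem a ha a ha

theorem kpair_mem (ha : a ∈ 𝕄.M) (hb : b ∈ 𝕄.M) : a.pair b ∈ 𝕄.M :=
  𝕄.pair_mem _ (singleton_mem ha) _ (𝕄.pair_mem a ha b hb)

theorem insert_mem (ha : a ∈ 𝕄.M) (hb : b ∈ 𝕄.M) : insert a b ∈ 𝕄.M := by
  rw [ZFSet.insert_eq]
  exact 𝕄.sUnion_mem _ (𝕄.pair_mem _ (singleton_mem ha) b hb)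

theorem numeral_mem (n : ℕ) : numeral n ∈ 𝕄.M :=
  𝕄.transitive _ 𝕄.omega_mem _ (mem_omega_iff.2 ⟨n, rfl⟩)

end GBModel

/-! ### Definability -/

namespace GBFormula

theorem exists_support (φ : GBFormula) : ∃ N, ∀ (A : Set ZFSet) (Cs : ℕ → Set ZFSet)
    (v w : ℕ → ZFSet), (∀ i < N, v i = w i) → (Sat A Cs v φ ↔ Sat A Cs w φ) := by
  induction φ with
  | mem i j =>
    refine ⟨max i j + 1, fun A Cs v w h => ?_⟩
    simp only [Sat, h i (by omega), h j (by omega)]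
  | eq i j =>
    refine ⟨max i j + 1, fun A Cs v w h => ?_⟩
    simp only [Sat, h i (by omega), h j (by omega)]
  | cls i j =>
    refine ⟨i + 1, fun A Cs v w h => ?_⟩
    simp only [Sat, h i (by omega)]
  | not φ ih =>
    obtain ⟨N, hN⟩ := ih
    exact ⟨N, fun A Cs v w h => not_congr (hN A Cs v w h)⟩
  | or φ ψ ihφ ihψ =>
    obtain ⟨N, hN⟩ := ihφ
    obtain ⟨K, hK⟩ := ihψ
    exact ⟨max N K, fun A Cs v w h => or_congr
      (hN A Cs v w fun i hi => h i (by omega)) (hK A Cs v w fun i hi => h i (by omega))⟩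
  | ex k φ ih =>
    obtain ⟨N, hN⟩ := ih
    refine ⟨N, fun A Cs v w h => exists_congr fun x => and_congr_right fun _ => hN A Cs _ _ ?_⟩
    intro i hi
    simp only [Function.update_apply, h i hi]

theorem exists_rename (φ : GBFormula) (f g : ℕ → ℕ) : ∃ ψ : GBFormula, ∀ (A : Set ZFSet)
    (Cs : ℕ → Set ZFSet) (v : ℕ → ZFSet), Sat A Cs v ψ ↔ Sat A (Cs ∘ g) (v ∘ f) φ := by
  induction φ generalizing f with
  | mem i j => exact ⟨.mem (f i) (f j), fun _ _ _ => Iff.rfl⟩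
  | eq i j => exact ⟨.eq (f i) (f j), fun _ _ _ => Iff.rfl⟩
  | cls i j => exact ⟨.cls (f i) (g j), fun _ _ _ => Iff.rfl⟩
  | not φ ih =>
    obtain ⟨ψ, hψ⟩ := ih f
    exact ⟨.not ψ, fun A Cs v => not_congr (hψ A Cs v)⟩
  | or φ₁ φ₂ ih₁ ih₂ =>
    obtain ⟨ψ₁, hψ₁⟩ := ih₁ f
    obtain ⟨ψ₂, hψ₂⟩ := ih₂ f
    exact ⟨.or ψ₁ ψ₂, fun A Cs v => or_congr (hψ₁ A Cs v) (hψ₂ A Cs v)⟩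
  | ex k φ ih =>
    -- The bound variable moves to `l`, above the image of every variable that occurs in `φ`.
    obtain ⟨N, hN⟩ := exists_support φ
    obtain ⟨l, hl⟩ : ∃ l, ∀ i < N, f i < l :=
      ⟨(Finset.range N).sup f + 1, fun i hi =>
        Nat.lt_succ_of_le (Finset.le_sup (Finset.mem_range.2 hi))⟩
    obtain ⟨ψ, hψ⟩ := ih (Function.update f k l)
    refine ⟨.ex l ψ, fun A Cs v => exists_congr fun x => and_congr_right fun _ => ?_⟩
    refine (hψ A Cs _).trans (hN _ _ _ _ fun i hi => ?_)
    obtain rfl | hik := eq_or_ne i k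
    · simp
    · simp [hik, (hl i hi).ne]

end GBFormula

namespace GBModel

/-- A relation on valuations in `M` that is first-order definable over `𝕄` with class
parameters. Set parameters are covered because every set of `𝕄` is a class. -/
def Definable (𝕄 : GBModel) (R : (ℕ → 𝕄.M) → Prop) : Prop :=
  ∃ (φ : GBFormula) (Cs : ℕ → Set ZFSet), (∀ n, Cs n ∈ 𝕄.Cls) ∧
    ∀ v, φ.Sat 𝕄.M Cs (fun n => v n) ↔ R v

/-- A function from valuations to `M` with definable graph. In the graph the value is variable `0`
and the arguments are shifted up by one. -/
structure DefinableFun (𝕄 : GBModel) (t : (ℕ → 𝕄.M) → ZFSet) : Prop where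
  mem (v : ℕ → 𝕄.M) : t v ∈ 𝕄.M
  graph : 𝕄.Definable fun v => v 0 = t (v ∘ Nat.succ)

variable {𝕄 : GBModel} {R S : (ℕ → 𝕄.M) → Prop} {s t : (ℕ → 𝕄.M) → ZFSet}

theorem coe_update (v : ℕ → 𝕄.M) (k : ℕ) (x : 𝕄.M) :
    (fun n => (Function.update v k x n : ZFSet)) =
      Function.update (fun n => (v n : ZFSet)) k x :=
  Function.comp_update Subtype.val v k x

namespace Definable

theorem congr (hR : 𝕄.Definable R) (h : ∀ v, R v ↔ S v) : 𝕄.Definable S := by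
  rwa [← funext fun v => propext (h v)]

theorem reindex (hR : 𝕄.Definable R) (f : ℕ → ℕ) : 𝕄.Definable fun v => R (v ∘ f) := by
  obtain ⟨φ, Cs, hCs, hφ⟩ := hR
  obtain ⟨ψ, hψ⟩ := φ.exists_rename f id
  exact ⟨ψ, Cs, hCs, fun v => (hψ 𝕄.M Cs _).trans (hφ (v ∘ f))⟩

theorem not (hR : 𝕄.Definable R) : 𝕄.Definable fun v => ¬R v := by
  obtain ⟨φ, Cs, hCs, hφ⟩ := hR
  exact ⟨.not φ, Cs, hCs, fun v => not_congr (hφ v)⟩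

theorem or (hR : 𝕄.Definable R) (hS : 𝕄.Definable S) : 𝕄.Definable fun v => R v ∨ S v := by
  obtain ⟨φ, Cs, hCs, hφ⟩ := hR
  obtain ⟨ψ, Ds, hDs, hψ⟩ := hS
  -- The two sequences of class parameters are interleaved.
  obtain ⟨φ', hφ'⟩ := φ.exists_rename id (2 * ·)
  obtain ⟨ψ', hψ'⟩ := ψ.exists_rename id (2 * · + 1)
  let Es : ℕ → Set ZFSet := fun n => if n % 2 = 0 then Cs (n / 2) else Ds (n / 2)
  have hEs_even : Es ∘ (2 * ·) = Cs := by
    funext n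
    simp [Es]
  have hEs_odd : Es ∘ (2 * · + 1) = Ds := by
    funext n
    simp [Es, Nat.add_mod, Nat.mul_add_div]
  refine ⟨.or φ' ψ', Es, fun n => ?_, fun v => or_congr ?_ ?_⟩
  · by_cases hn : n % 2 = 0
    · simpa only [Es, if_pos hn] using hCs (n / 2)
    · simpa only [Es, if_neg hn] using hDs (n / 2)
  · rw [hφ', hEs_even]
    exact hφ v
  · rw [hψ', hEs_odd]
    exact hψ v

theorem and (hR : 𝕄.Definable R) (hS : 𝕄.Definable S) : 𝕄.Definable fun v => R v ∧ S v :=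
  (hR.not.or hS.not).not.congr fun v => by tauto

theorem imp (hR : 𝕄.Definable R) (hS : 𝕄.Definable S) : 𝕄.Definable fun v => R v → S v :=
  (hR.not.or hS).congr fun v => by tauto

theorem iff (hR : 𝕄.Definable R) (hS : 𝕄.Definable S) : 𝕄.Definable fun v => (R v ↔ S v) :=
  ((hR.imp hS).and (hS.imp hR)).congr fun v => by tauto

theorem ex {Q : 𝕄.M → (ℕ → 𝕄.M) → Prop}
    (hQ : 𝕄.Definable fun v => Q (v 0) (v ∘ Nat.succ)) : 𝕄.Definable fun v => ∃ x, Q x v := by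
  obtain ⟨φ, Cs, hCs, hφ⟩ := hQ
  have hex : 𝕄.Definable fun v => ∃ x, Q x (v ∘ Nat.succ) := by
    refine ⟨.ex 0 φ, Cs, hCs, fun v => ?_⟩
    have sat_iff (x : 𝕄.M) : φ.Sat 𝕄.M Cs (Function.update (fun n => (v n : ZFSet)) 0 x) ↔
        Q x (v ∘ Nat.succ) := by
      convert hφ (Function.update v 0 x) using 2
      · exact (coe_update v 0 x).symm
      · simp
      · funext n
        simp
    simp only [GBFormula.Sat, Subtype.exists, ← sat_iff, exists_prop]
  exact hex.reindex Nat.pred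

theorem all {Q : 𝕄.M → (ℕ → 𝕄.M) → Prop}
    (hQ : 𝕄.Definable fun v => Q (v 0) (v ∘ Nat.succ)) : 𝕄.Definable fun v => ∀ x, Q x v :=
  (ex (Q := fun x v => ¬Q x v) hQ.not).not.congr fun _ => not_exists_not

theorem subst {Q : ZFSet → (ℕ → 𝕄.M) → Prop}
    (hQ : 𝕄.Definable fun v => Q (v 0) (v ∘ Nat.succ)) (ht : 𝕄.DefinableFun t) :
    𝕄.Definable fun v => Q (t v) v := by
  have hex : 𝕄.Definable fun v => ∃ x : 𝕄.M, x = t v ∧ Q x v := ex (ht.graph.and hQ)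
  refine hex.congr fun v => ⟨?_, fun h => ⟨⟨t v, ht.mem v⟩, rfl, h⟩⟩
  rintro ⟨x, hx, hQx⟩
  rwa [← hx]

end Definable

theorem DefinableFun.var (i : ℕ) : 𝕄.DefinableFun fun v => v i :=
  ⟨fun v => (v i).2, .eq 0 (i + 1), fun _ => (∅ : ZFSet).toSet,
    fun _ => 𝕄.sets_are_classes ∅ 𝕄.empty_mem, fun _ => Iff.rfl⟩

theorem DefinableFun.shift (ht : 𝕄.DefinableFun t) : 𝕄.DefinableFun fun v => t (v ∘ Nat.succ) :=
  ⟨fun _ => ht.mem _, ht.graph.reindex fun | 0 => 0 | n + 1 => n + 2⟩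

namespace Definable

theorem mem (hs : 𝕄.DefinableFun s) (ht : 𝕄.DefinableFun t) :
    𝕄.Definable fun v => s v ∈ t v := by
  have hvar : 𝕄.Definable fun v => (v 1 : ZFSet) ∈ (v 0 : ZFSet) :=
    ⟨.mem 1 0, fun _ => (∅ : ZFSet).toSet,
      fun _ => 𝕄.sets_are_classes ∅ 𝕄.empty_mem, fun _ => Iff.rfl⟩
  exact subst (Q := fun x v => x ∈ t v)
    (subst (Q := fun y v => (v 0 : ZFSet) ∈ y) hvar ht.shift) hs

theorem eq (hs : 𝕄.DefinableFun s) (ht : 𝕄.DefinableFun t) :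
    𝕄.Definable fun v => s v = t v :=
  subst (Q := fun x v => x = t v) ht.graph hs

theorem mem_class {C : Set ZFSet} (hC : C ∈ 𝕄.Cls) (ht : 𝕄.DefinableFun t) :
    𝕄.Definable fun v => t v ∈ C :=
  subst (Q := fun x _ => x ∈ C) ⟨.cls 0 0, fun _ => C, fun _ => hC, fun _ => Iff.rfl⟩ ht

theorem setOf_mem_cls {P : ZFSet → Prop} (hP : 𝕄.Definable fun v => P (v 0)) :
    {x | x ∈ 𝕄.M ∧ P x} ∈ 𝕄.Cls := by
  obtain ⟨φ, Cs, hCs, hφ⟩ := hP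
  convert 𝕄.comprehension φ (fun _ => ∅) Cs (fun _ => 𝕄.empty_mem) hCs using 3 with x
  refine and_congr_right fun hx => ?_
  convert (hφ (Function.update (fun _ => ⟨∅, 𝕄.empty_mem⟩) 0 ⟨x, hx⟩)).symm using 2
  · simp
  · exact (coe_update (fun _ => ⟨∅, 𝕄.empty_mem⟩) 0 ⟨x, hx⟩).symm

end Definable

namespace DefinableFun

theorem of_mem (htM : ∀ v, t v ∈ 𝕄.M)
    (ht : 𝕄.Definable fun v => (v 0 : ZFSet) ∈ t (v ∘ Nat.succ)) : 𝕄.DefinableFun t := by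
  refine ⟨htM, ?_⟩
  have hext : 𝕄.Definable fun v =>
      ∀ x : 𝕄.M, (x : ZFSet) ∈ (v 0 : ZFSet) ↔ (x : ZFSet) ∈ t (v ∘ Nat.succ) :=
    .all ((Definable.mem (var 0) (var 1)).iff (ht.reindex fun | 0 => 0 | n + 1 => n + 2))
  refine hext.congr fun v => ⟨fun h => ZFSet.ext fun x => ⟨fun hx => ?_, fun hx => ?_⟩, ?_⟩
  · exact (h ⟨x, 𝕄.transitive _ (v 0).2 x hx⟩).1 hx
  · exact (h ⟨x, 𝕄.transitive _ (htM _) x hx⟩).2 hx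
  · rintro h x
    rw [h]

theorem const {a : ZFSet} (ha : a ∈ 𝕄.M) : 𝕄.DefinableFun fun _ => a :=
  of_mem (fun _ => ha) (Definable.mem_class (𝕄.sets_are_classes a ha) (var 0))

theorem upair (hs : 𝕄.DefinableFun s) (ht : 𝕄.DefinableFun t) :
    𝕄.DefinableFun fun v => {s v, t v} :=
  of_mem (fun v => 𝕄.pair_mem _ (hs.mem v) _ (ht.mem v)) <|
    ((Definable.eq (var 0) hs.shift).or (Definable.eq (var 0) ht.shift)).congr fun _ =>
      ZFSet.mem_pair.symm

theorem singleton (ht : 𝕄.DefinableFun t) : 𝕄.DefinableFun fun v => {t v} := by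
  simpa only [ZFSet.pair_eq_singleton] using ht.upair ht

theorem kpair (hs : 𝕄.DefinableFun s) (ht : 𝕄.DefinableFun t) :
    𝕄.DefinableFun fun v => (s v).pair (t v) :=
  hs.singleton.upair (hs.upair ht)

theorem insert (hs : 𝕄.DefinableFun s) (ht : 𝕄.DefinableFun t) :
    𝕄.DefinableFun fun v => insert (s v) (t v) :=
  of_mem (fun v => insert_mem (hs.mem v) (ht.mem v)) <|
    ((Definable.eq (var 0) hs.shift).or (Definable.mem (var 0) ht.shift)).congr fun _ =>
      ZFSet.mem_insert_iff.symm

theorem ite (hR : 𝕄.Definable R) (hs : 𝕄.DefinableFun s) (ht : 𝕄.DefinableFun t) :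
    𝕄.DefinableFun fun v => if R v then s v else t v := by
  refine ⟨fun v => ?_, ?_⟩
  · split_ifs
    exacts [hs.mem v, ht.mem v]
  · have hR' := hR.reindex Nat.succ
    refine ((hR'.and hs.graph).or (hR'.not.and ht.graph)).congr fun v => ?_
    by_cases hv : R (v ∘ Nat.succ) <;> simp [hv]

end DefinableFun

/-! ### Replacement and recursion along `ω` -/

theorem replacement {T : ZFSet → ZFSet → Prop} {a : ZFSet}
    (hT : 𝕄.Definable fun v => T (v 0) (v 1)) (ha : a ∈ 𝕄.M)
    (hfun : ∀ x ∈ a, ∃! y, y ∈ 𝕄.M ∧ T x y) :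
    ∃ b ∈ 𝕄.M, ∀ y, y ∈ b ↔ y ∈ 𝕄.M ∧ ∃ x ∈ a, T x y := by
  have hgraph : 𝕄.Definable fun v => ∃ x y : 𝕄.M, (v 0 : ZFSet) = (x : ZFSet).pair y ∧ T x y :=
    .ex <| .ex <| (Definable.eq (.var 2) (.kpair (.var 1) (.var 0))).and (hT.reindex (1 - ·))
  have hrange : 𝕄.Definable fun v => ∃ x : 𝕄.M, (x : ZFSet) ∈ a ∧ T x (v 0) :=
    .ex <| (Definable.mem (.var 0) (.const ha)).and hT
  obtain ⟨b, hb, hcollect⟩ := 𝕄.collection _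
    (hgraph.setOf_mem_cls (P := fun z => ∃ x y : 𝕄.M, z = (x : ZFSet).pair y ∧ T x y)) a ha
    fun x hx => by
      have hxM := 𝕄.transitive a ha x hx
      obtain ⟨y, ⟨hyM, hT⟩, -⟩ := hfun x hx
      exact ⟨y, hyM, kpair_mem hxM hyM, ⟨x, hxM⟩, ⟨y, hyM⟩, rfl, hT⟩
  obtain ⟨c, hc, hsep⟩ := 𝕄.separation _
    (hrange.setOf_mem_cls (P := fun y => ∃ x : 𝕄.M, (x : ZFSet) ∈ a ∧ T x y)) b hb
  refine ⟨c, hc, fun y => (hsep y).trans ⟨?_, ?_⟩⟩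
  · rintro ⟨-, hyM, x, hx, hT⟩
    exact ⟨hyM, x, hx, hT⟩
  · rintro ⟨hyM, x, hx, hT⟩
    obtain ⟨y', hy'b, -, x₀, y₀, hpair, hT'⟩ := hcollect x hx
    obtain ⟨rfl, rfl⟩ := ZFSet.pair_inj.1 hpair
    obtain rfl := (hfun x₀ hx).unique ⟨hyM, hT⟩ ⟨y₀.2, hT'⟩
    exact ⟨hy'b, hyM, x₀, hx, hT⟩

end GBModel

theorem mem_zimage {f : ZFSet → ZFSet} {a y : ZFSet} : y ∈ zimage f a ↔ ∃ x ∈ a, f x = y :=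
  @ZFSet.mem_image f (Classical.allZFSetDefinable _) a y

namespace GBModel

variable {𝕄 : GBModel} {f : ZFSet → ZFSet} {a t : ZFSet}

theorem zimage_mem (hf : 𝕄.DefinableFun fun v => f (v 0)) (ha : a ∈ 𝕄.M) : zimage f a ∈ 𝕄.M := by
  have hfM : ∀ x ∈ a, f x ∈ 𝕄.M := fun x hx => hf.mem fun _ => ⟨x, 𝕄.transitive a ha x hx⟩
  obtain ⟨b, hb, hmem⟩ := replacement (T := fun x y => y = f x) (Definable.eq (.var 1) hf) ha
    fun x hx => ⟨f x, ⟨hfM x hx, rfl⟩, fun _ hy => hy.2⟩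
  convert hb
  ext y
  rw [mem_zimage, hmem]
  constructor
  · rintro ⟨x, hx, rfl⟩
    exact ⟨hfM x hx, x, hx, rfl⟩
  · rintro ⟨-, x, hx, rfl⟩
    exact ⟨x, hx, rfl⟩

/-- A partial computation of the sequence `n ↦ f^[n] a`: a set in which every element is either
`⟨0, a⟩` or obtained from an element `⟨x, y⟩` as `⟨x + 1, f y⟩`. -/
def IsIterateApprox (𝕄 : GBModel) (f : ZFSet → ZFSet) (a t : ZFSet) : Prop :=
  ∀ z : 𝕄.M, (z : ZFSet) ∈ t → z = ZFSet.pair ∅ a ∨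
    ∃ x y : 𝕄.M, (x : ZFSet).pair y ∈ t ∧ z = ZFSet.pair (insert (x : ZFSet) x) (f y)

theorem IsIterateApprox.eq_of_pair_mem (happrox : 𝕄.IsIterateApprox f a t) (ht : t ∈ 𝕄.M)
    (x y : ZFSet) (hxy : x.pair y ∈ t) : ∃ n, y = f^[n] a ∧ x = numeral n := by
  induction x using ZFSet.inductionOn generalizing y with
  | _ x ih =>
    rcases happrox ⟨_, 𝕄.transitive t ht _ hxy⟩ hxy with h | ⟨x', y', hxy', h⟩
    · obtain ⟨rfl, rfl⟩ := ZFSet.pair_inj.1 h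
      exact ⟨0, rfl, rfl⟩
    · obtain ⟨rfl, rfl⟩ := ZFSet.pair_inj.1 h
      obtain ⟨n, hy', hx'⟩ := ih x' (ZFSet.mem_insert _ _) y' hxy'
      exact ⟨n + 1, by rw [hy', Function.iterate_succ_apply'], by rw [hx', numeral]⟩

theorem iterate_mem (hf : ∀ x ∈ 𝕄.M, f x ∈ 𝕄.M) (ha : a ∈ 𝕄.M) (n : ℕ) : f^[n] a ∈ 𝕄.M :=
  Set.MapsTo.iterate (s := 𝕄.M) hf n ha

theorem exists_isIterateApprox (hf : ∀ x ∈ 𝕄.M, f x ∈ 𝕄.M) (ha : a ∈ 𝕄.M) (n : ℕ) :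
    ∃ t ∈ 𝕄.M, 𝕄.IsIterateApprox f a t ∧ (numeral n).pair (f^[n] a) ∈ t := by
  induction n with
  | zero =>
    exact ⟨{ZFSet.pair ∅ a}, singleton_mem (kpair_mem 𝕄.empty_mem ha),
      fun z hz => .inl (ZFSet.mem_singleton.1 hz), ZFSet.mem_singleton.2 rfl⟩
  | succ n ih =>
    obtain ⟨t, ht, happrox, hmem⟩ := ih
    have hnext := kpair_mem (numeral_mem (𝕄 := 𝕄) (n + 1)) (iterate_mem hf ha (n + 1))
    refine ⟨_, insert_mem hnext ht, fun z hz => ?_, ZFSet.mem_insert _ _⟩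
    rcases ZFSet.mem_insert_iff.1 hz with hz | hz
    · refine .inr ⟨⟨_, numeral_mem n⟩, ⟨_, iterate_mem hf ha n⟩, ZFSet.mem_insert_of_mem _ hmem, ?_⟩
      rw [hz, numeral, Function.iterate_succ_apply']
    · refine (happrox z hz).imp_right ?_
      rintro ⟨x, y, hxy, hz⟩
      exact ⟨x, y, ZFSet.mem_insert_of_mem _ hxy, hz⟩

theorem Definable.isIterateApprox (hf : 𝕄.DefinableFun fun v => f (v 0)) (ha : a ∈ 𝕄.M) :
    𝕄.Definable fun v => 𝕄.IsIterateApprox f a (v 0) :=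
  .all <| (Definable.mem (.var 0) (.var 1)).imp <|
    (Definable.eq (.var 0) (.kpair (.const 𝕄.empty_mem) (.const ha))).or <|
      .ex <| .ex <| (Definable.mem (.kpair (.var 1) (.var 0)) (.var 3)).and <|
        Definable.eq (.var 2) (.kpair (.insert (.var 1) (.var 1)) hf)

theorem Definable.iterate (hf : 𝕄.DefinableFun fun v => f (v 0)) (ha : a ∈ 𝕄.M) :
    𝕄.Definable fun v => ∃ n, (v 0 : ZFSet) = f^[n] a ∧ (v 1 : ZFSet) = numeral n := by
  have happrox : 𝕄.Definable fun v =>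
      ∃ t : 𝕄.M, 𝕄.IsIterateApprox f a t ∧ (v 1 : ZFSet).pair (v 0) ∈ (t : ZFSet) :=
    .ex <| (Definable.isIterateApprox hf ha).and <|
      Definable.mem (.kpair (.var 2) (.var 1)) (.var 0)
  refine happrox.congr fun v => ⟨?_, ?_⟩
  · rintro ⟨t, ht, hmem⟩
    exact ht.eq_of_pair_mem t.2 _ _ hmem
  · rintro ⟨n, hy, hx⟩
    obtain ⟨t, ht, happrox, hmem⟩ :=
      exists_isIterateApprox (fun x hx => hf.mem fun _ => ⟨x, hx⟩) ha n
    exact ⟨⟨t, ht⟩, happrox, by rwa [hx, hy]⟩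

theorem exists_mem_iff_iterate {g : ZFSet → ZFSet → ZFSet}
    (hf : 𝕄.DefinableFun fun v => f (v 0)) (ha : a ∈ 𝕄.M)
    (hg : 𝕄.DefinableFun fun v => g (v 0) (v 1)) :
    ∃ b ∈ 𝕄.M, ∀ y, y ∈ b ↔ ∃ n, y = g (f^[n] a) (numeral n) := by
  have hiter (n : ℕ) : f^[n] a ∈ 𝕄.M := iterate_mem (fun x hx => hf.mem fun _ => ⟨x, hx⟩) ha n
  have hgM (n : ℕ) : g (f^[n] a) (numeral n) ∈ 𝕄.M :=
    hg.mem fun | 0 => ⟨_, hiter n⟩ | _ + 1 => ⟨_, numeral_mem n⟩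
  let T (x y : ZFSet) : Prop :=
    ∃ z : 𝕄.M, (∃ n, (z : ZFSet) = f^[n] a ∧ x = numeral n) ∧ y = g z x
  have hT : 𝕄.Definable fun v => T (v 0) (v 1) :=
    .ex <| (Definable.iterate hf ha).and <| .eq (.var 2) hg
  have hT_numeral (n : ℕ) (y : ZFSet) : T (numeral n) y ↔ y = g (f^[n] a) (numeral n) := by
    constructor
    · rintro ⟨z, ⟨m, hz, hnm⟩, rfl⟩
      rw [hz, numeral_injective hnm]
    · exact fun hy => ⟨⟨_, hiter n⟩, ⟨n, rfl, rfl⟩, hy⟩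
  obtain ⟨b, hb, hmem⟩ := replacement hT 𝕄.omega_mem fun x hx => by
    obtain ⟨n, rfl⟩ := mem_omega_iff.1 hx
    exact ⟨_, ⟨hgM n, (hT_numeral n _).2 rfl⟩, fun y hy => (hT_numeral n y).1 hy.2⟩
  refine ⟨b, hb, fun y => (hmem y).trans ⟨?_, ?_⟩⟩
  · rintro ⟨-, x, hx, hy⟩
    obtain ⟨n, rfl⟩ := mem_omega_iff.1 hx
    exact ⟨n, (hT_numeral n y).1 hy⟩
  · rintro ⟨n, rfl⟩
    exact ⟨hgM n, _, mem_omega_iff.2 ⟨n, rfl⟩, (hT_numeral n _).2 rfl⟩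

end GBModel

/-! ### Names -/

section Names

variable {S G : Set ZFSet} {σ τ p z : ZFSet}

theorem mem_sUnion_sUnion_of_pair_mem (h : τ.pair p ∈ σ) : τ ∈ ZFSet.sUnion (ZFSet.sUnion σ) :=
  ZFSet.mem_sUnion_of_mem (ZFSet.mem_singleton.2 rfl)
    (ZFSet.mem_sUnion_of_mem (ZFSet.mem_pair.2 (.inl rfl)) h)

theorem rank_lt_of_pair_mem (h : τ.pair p ∈ σ) : τ.rank < σ.rank :=
  (ZFSet.rank_lt_of_mem (mem_sUnion_sUnion_of_pair_mem h)).trans_le <|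
    (ZFSet.rank_sUnion_le _).trans (ZFSet.rank_sUnion_le _)

theorem isName_iff :
    IsName S σ ↔ ∀ x ∈ σ, ∃ τ p : ZFSet, x = τ.pair p ∧ p ∈ S ∧ IsName S τ := by
  rw [IsName, IsNameAux]
  refine forall₂_congr fun x hx => exists₂_congr fun τ p => and_congr_right ?_
  rintro rfl
  exact and_congr_right fun _ => exists_prop_of_true (rank_lt_of_pair_mem hx)

theorem mem_nameEval :
    z ∈ nameEval G σ ↔ ∃ τ p : ZFSet, p ∈ G ∧ τ.pair p ∈ σ ∧ nameEval G τ = z := by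
  rw [nameEval, nameEvalAux, mem_zimage]
  constructor
  · rintro ⟨τ, hτ, rfl⟩
    obtain ⟨-, p, hp, hmem⟩ := ZFSet.mem_sep.1 hτ
    refine ⟨τ, p, hp, hmem, ?_⟩
    rw [dif_pos (rank_lt_of_pair_mem hmem), nameEval]
  · rintro ⟨τ, p, hp, hmem, rfl⟩
    exact ⟨τ, ZFSet.mem_sep.2 ⟨mem_sUnion_sUnion_of_pair_mem hmem, p, hp, hmem⟩,
      dif_pos (rank_lt_of_pair_mem hmem)⟩

theorem isName_empty : IsName S ∅ :=
  isName_iff.2 fun x hx => (ZFSet.notMem_empty x hx).elim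

theorem IsName.insert_pair (hσ : IsName S σ) (hτ : IsName S τ) (hp : p ∈ S) :
    IsName S (insert (τ.pair p) σ) :=
  isName_iff.2 fun x hx => (ZFSet.mem_insert_iff.1 hx).elim
    (fun hx => ⟨τ, p, hx, hp, hτ⟩) (isName_iff.1 hσ x)

theorem nameEval_empty : nameEval G ∅ = ∅ := by
  ext z
  simp [mem_nameEval]

theorem nameEval_insert_pair (hp : p ∈ G) :
    nameEval G (insert (τ.pair p) σ) = insert (nameEval G τ) (nameEval G σ) := by
  ext z
  simp only [mem_nameEval, ZFSet.mem_insert_iff, ZFSet.pair_inj]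
  constructor
  · rintro ⟨τ', p', hp', ⟨rfl, rfl⟩ | hmem, rfl⟩
    · exact .inl rfl
    · exact .inr ⟨τ', p', hp', hmem, rfl⟩
  · rintro (rfl | ⟨τ', p', hp', hmem, rfl⟩)
    · exact ⟨τ, p, hp, .inl ⟨rfl, rfl⟩, rfl⟩
    · exact ⟨τ', p', hp', .inr hmem, rfl⟩

/-- The check name `ň = {⟨m̌, p⟩ | m < n}` of a natural number, where `p` is meant to be the maximal
condition of the forcing. -/
def checkNat (p : ZFSet) (n : ℕ) : ZFSet := (fun τ => insert (τ.pair p) τ)^[n] ∅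

theorem checkNat_succ (p : ZFSet) (n : ℕ) :
    checkNat p (n + 1) = insert ((checkNat p n).pair p) (checkNat p n) :=
  Function.iterate_succ_apply' _ n ∅

theorem isName_checkNat (hp : p ∈ S) (n : ℕ) : IsName S (checkNat p n) := by
  induction n with
  | zero => exact isName_empty
  | succ n ih =>
    rw [checkNat_succ]
    exact ih.insert_pair ih hp

theorem nameEval_checkNat (hp : p ∈ G) (n : ℕ) : nameEval G (checkNat p n) = numeral n := by
  induction n with
  | zero => exact nameEval_empty
  | succ n ih => rw [checkNat_succ, nameEval_insert_pair hp, ih, numeral]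

end Names

namespace ClassForcing

variable {𝕄 : GBModel} {F : ClassForcing 𝕄}

theorem mem_of_mem_P (F : ClassForcing 𝕄) {p : ZFSet} (hp : p ∈ F.P) : p ∈ 𝕄.M :=
  𝕄.classes_sub F.P F.P_cls hp

theorem one_mem_of_isFilterOn {G : Set ZFSet} (hG : IsFilterOn F.P F.le G) : F.one ∈ G := by
  obtain ⟨hGP, ⟨p, hp⟩, hup, -⟩ := hG
  exact hup p hp F.one F.one_mem (F.le_one p (hGP hp))

theorem exists_name_of_subset_omega {c : ZFSet → ZFSet}
    (hc : 𝕄.DefinableFun fun v => c (v 0)) (hcP : ∀ n ∈ ZFSet.omega, c n ∈ F.P) :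
    ∃ σ ∈ 𝕄.M, IsName F.P σ ∧ ∀ G, IsFilterOn F.P F.le G →
      ∀ z, z ∈ nameEval G σ ↔ z ∈ ZFSet.omega ∧ c z ∈ G := by
  obtain ⟨σ, hσ, hmem⟩ : ∃ σ ∈ 𝕄.M, ∀ y, y ∈ σ ↔
      ∃ n, y = (checkNat F.one n).pair (c (numeral n)) :=
    GBModel.exists_mem_iff_iterate (g := fun τ x => τ.pair (c x))
      (.insert (.kpair (.var 0) (.const (F.mem_of_mem_P F.one_mem))) (.var 0)) 𝕄.empty_mem
      (.kpair (.var 0) hc.shift)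
  refine ⟨σ, hσ, isName_iff.2 fun x hx => ?_, fun G hG z => mem_nameEval.trans ⟨?_, ?_⟩⟩
  · obtain ⟨n, rfl⟩ := (hmem x).1 hx
    exact ⟨_, _, rfl, hcP _ (mem_omega_iff.2 ⟨n, rfl⟩), isName_checkNat F.one_mem n⟩
  · rintro ⟨τ, p, hp, hτp, rfl⟩
    obtain ⟨n, hn⟩ := (hmem _).1 hτp
    obtain ⟨rfl, rfl⟩ := ZFSet.pair_inj.1 hn
    rw [nameEval_checkNat (one_mem_of_isFilterOn hG)]
    exact ⟨mem_omega_iff.2 ⟨n, rfl⟩, hp⟩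
  · rintro ⟨hz, hcz⟩
    obtain ⟨n, rfl⟩ := mem_omega_iff.1 hz
    exact ⟨_, _, hcz, (hmem _).2 ⟨n, rfl⟩, nameEval_checkNat (one_mem_of_isFilterOn hG) n⟩

theorem isGeneric_of_minimal {p : ZFSet} (hp : p ∈ F.P)
    (hmin : ∀ q ∈ F.P, F.le q p → F.le p q) :
    IsGeneric 𝕄 F.P F.le {q | q ∈ F.P ∧ F.le p q} := by
  have hpG : p ∈ {q | q ∈ F.P ∧ F.le p q} := ⟨hp, F.le_refl p hp⟩
  refine ⟨⟨fun q hq => hq.1, ⟨p, hpG⟩, ?_, fun q hq r hr => ⟨p, hpG, hq.2, hr.2⟩⟩, ?_⟩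
  · exact fun q hq r hr hqr => ⟨hr, F.le_trans p q r hq.2 hqr⟩
  · rintro D - ⟨hDP, hdense⟩
    obtain ⟨q, hqD, hqp⟩ := hdense p hp
    exact ⟨q, ⟨hDP hqD, hmin q (hDP hqD) hqp⟩, hqD⟩

theorem not_isBoundedName_of_isProperClass {σ : ZFSet} {X : Set ZFSet}
    (hX : IsProperClass 𝕄 X) (hXσ : X ⊆ PossibleValues 𝕄 F.P F.le σ) :
    ¬IsBoundedName 𝕄 F σ := by
  rintro ⟨A, hA, hσA⟩
  obtain ⟨b, hb, hmem⟩ := 𝕄.separation X hX.1 A hA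
  refine hX.2 ⟨b, hb, Set.ext fun x => (hmem x).trans (and_iff_right_of_imp fun hx => ?_)⟩
  exact hσA ⟨hXσ hx, 𝕄.classes_sub X hX.1 hx⟩

end ClassForcing

/-! ### Partial functions from `ω` to `2` -/

theorem IsPFunOn.subset_of_total {p q γ : ZFSet} {Y : Set ZFSet} (hq : IsPFunOn q γ Y)
    (hp : ∀ a ∈ γ, ∃ b, a.pair b ∈ p) (hpq : p ⊆ q) : q ⊆ p := by
  intro x hx
  obtain ⟨a, b, rfl, ha, -⟩ := hq.1 x hx
  obtain ⟨b', hb'⟩ := hp a ha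
  rwa [hq.2 a b b' hx (hpq hb')]

/-- The characteristic function `ω → 2` of the set of natural numbers in `x`, as a set of pairs. -/
def charFun (x : ZFSet) : ZFSet :=
  zimage (fun n => n.pair (if n ∈ x then {∅} else ∅)) ZFSet.omega

theorem pair_mem_charFun {x n b : ZFSet} :
    n.pair b ∈ charFun x ↔ n ∈ ZFSet.omega ∧ b = if n ∈ x then {∅} else ∅ := by
  rw [charFun, mem_zimage]
  constructor
  · rintro ⟨m, hm, h⟩
    obtain ⟨rfl, rfl⟩ := ZFSet.pair_inj.1 h
    exact ⟨hm, rfl⟩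
  · rintro ⟨hn, rfl⟩
    exact ⟨n, hn, rfl⟩

theorem singleton_subset_charFun_iff.{u} {x n : ZFSet.{u}} (hn : n ∈ ZFSet.omega) :
    {n.pair {∅}} ⊆ charFun x ↔ n ∈ x := by
  have hne : ({∅} : ZFSet.{u}) ≠ ∅ :=
    ne_of_mem_of_not_mem' (ZFSet.mem_singleton.2 rfl) (ZFSet.notMem_empty ∅)
  simp only [ZFSet.subset_def, ZFSet.mem_singleton, forall_eq, pair_mem_charFun]
  by_cases hnx : n ∈ x <;> simp [hn, hnx, hne]

section CohenConditions

variable {𝕄 : GBModel}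

theorem pcond_charFun {x : ZFSet} (hx : x ∈ 𝕄.M) : PCond 𝕄 (charFun x) := by
  refine ⟨GBModel.zimage_mem ?_ 𝕄.omega_mem, fun z hz => ?_, fun a b b' hb hb' => ?_⟩
  · exact .kpair (.var 0) (.ite (.mem (.var 0) (.const hx))
      (.const (GBModel.singleton_mem 𝕄.empty_mem)) (.const 𝕄.empty_mem))
  · obtain ⟨n, hn, rfl⟩ := mem_zimage.1 hz
    refine ⟨n, _, rfl, hn, ?_⟩
    split_ifs
    exacts [.inr rfl, .inl rfl]
  · rw [(pair_mem_charFun.1 hb).2, (pair_mem_charFun.1 hb').2]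

theorem pcond_singleton {n : ZFSet} (hn : n ∈ ZFSet.omega) : PCond 𝕄 {n.pair {∅}} := by
  have hnM := 𝕄.transitive _ 𝕄.omega_mem n hn
  refine ⟨GBModel.singleton_mem (GBModel.kpair_mem hnM (GBModel.singleton_mem 𝕄.empty_mem)),
    fun z hz => ⟨n, {∅}, ZFSet.mem_singleton.1 hz, hn, .inr rfl⟩, fun a b b' hb hb' => ?_⟩
  rw [ZFSet.mem_singleton, ZFSet.pair_inj] at hb hb'
  exact hb.2.trans hb'.2.symm

theorem exists_isGeneric_singleton_mem_iff {F : ClassForcing 𝕄}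
    (hP : F.P = {p : ZFSet | PCond 𝕄 p}) (hle : ∀ p ∈ F.P, ∀ q ∈ F.P, (F.le p q ↔ q ⊆ p))
    {x : ZFSet} (hx : x ∈ 𝕄.M) : ∃ G, IsGeneric 𝕄 F.P F.le G ∧
      ∀ n ∈ ZFSet.omega, ({n.pair {∅}} ∈ G ↔ n ∈ x) := by
  have hchar : charFun x ∈ F.P := hP ▸ pcond_charFun hx
  have htotal : ∀ n ∈ ZFSet.omega, ∃ b, n.pair b ∈ charFun x :=
    fun n hn => ⟨_, pair_mem_charFun.2 ⟨hn, rfl⟩⟩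
  have hmin : ∀ q ∈ F.P, F.le q (charFun x) → F.le (charFun x) q := fun q hq hqx => by
    have hq' : PCond 𝕄 q := by rwa [hP] at hq
    rw [hle _ hchar _ hq]
    exact hq'.2.subset_of_total htotal ((hle _ hq _ hchar).1 hqx)
  refine ⟨_, ClassForcing.isGeneric_of_minimal hchar hmin, fun n hn => ?_⟩
  have hsingle : {n.pair {∅}} ∈ F.P := hP ▸ pcond_singleton hn
  rw [Set.mem_ofPred_eq, hle _ hchar _ hsingle, singleton_subset_charFun_iff hn]
  exact and_iff_right hsingle

end CohenConditions

/-- Let `ℙ` be the forcing whose conditions are the (not necessarily finite)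
partial functions from `ω` to `2` lying in `M`, ordered by reverse inclusion. Then there is a
`ℙ`-name `σ ∈ M` such that every `x ⊆ ω` in `M` is the value `σ^G` of `σ` under some
`ℙ`-generic `G`; in particular, if `𝒫(ω)^M` is a proper class of `𝕄`, then `σ` is an
unbounded `ℙ`-name. -/
theorem cohenlike_unbounded_name
    (𝕄 : GBModel) (F : ClassForcing 𝕄)
    (hP : F.P = {p : ZFSet | PCond 𝕄 p})
    (hle : ∀ p ∈ F.P, ∀ q ∈ F.P, (F.le p q ↔ q ⊆ p)) :
    ∃ σ : ZFSet, σ ∈ 𝕄.M ∧ IsName F.P σ ∧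
      (∀ x : ZFSet, x ∈ 𝕄.M → x ⊆ ZFSet.omega →
        ∃ G : Set ZFSet, IsGeneric 𝕄 F.P F.le G ∧ nameEval G σ = x) ∧
      (IsProperClass 𝕄 (PowOmega 𝕄) → ¬ IsBoundedName 𝕄 F σ) := by
  obtain ⟨σ, hσM, hσ, heval⟩ := ClassForcing.exists_name_of_subset_omega (F := F)
    (c := fun n => {n.pair {∅}})
    (.singleton (.kpair (.var 0) (.const (GBModel.singleton_mem 𝕄.empty_mem))))
    fun n hn => hP ▸ pcond_singleton hn
  have hvalue : ∀ x ∈ 𝕄.M, x ⊆ ZFSet.omega →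
      ∃ G, IsGeneric 𝕄 F.P F.le G ∧ nameEval G σ = x := fun x hxM hx => by
    obtain ⟨G, hG, hGx⟩ := exists_isGeneric_singleton_mem_iff hP hle hxM
    refine ⟨G, hG, ZFSet.ext fun n => ?_⟩
    rw [heval G hG.1]
    exact ⟨fun ⟨hn, hnG⟩ => (hGx n hn).1 hnG, fun hn => ⟨hx hn, (hGx n (hx hn)).2 hn⟩⟩
  exact ⟨σ, hσM, hσ, hvalue, fun hproper =>
    ClassForcing.not_isBoundedName_of_isProperClass hproper fun x hx => hvalue x hx.1 hx.2⟩

end CF
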